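/- arXiv:2202.08308 — 2 statements merged into one kernel-verified Lean document; each statement's English description precedes it below -/
import Mathlib

section
/- Let n be any positive integer and λ any infinite cardinal, and let 𝓘_λ^n carry a shift-continuous T₁-topology (so that it is a T₁-semitopological semigroup). Then the following conditions are equivalent: (i) 𝓘_λ^n is sequentially pracompact; (ii) 𝓘_λ^n is totally countably pracompact; (iii) 𝓘_λ^n is feebly compact. -/
/-!
The element `α` of `𝓘_γ^n` lies below `β` in the natural order iff `α⁻¹ * β * α⁻¹ = α⁻¹`, and the
map `β ↦ α⁻¹ * β * α⁻¹` has finite range. In a shift-continuous `T₁` topology every principal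
up-set is therefore clopen. Since ranks are bounded, the order has no infinite ascending chains.

The equivalence holds for every ordered space with these two properties. Such a space is Hausdorff,
so sequential pracompactness implies total countable pracompactness, which implies feeble
compactness in any space. For the remaining implication, a maximal element of an open set is
isolated, so isolated points are dense. Given a sequence `u` of isolated points, let `a` be maximal
among the elements lying below infinitely many `u k`, and pass to the subsequence of the terms
above `a`. Feeble compactness gives a cluster point `x` of each further subsequence; as up-sets are
closed, `a ≤ x`, and as they are open, `x` lies below infinitely many `u k`, so `x = a` by
maximality. Hence the subsequence converges to `a`.
-/

open Set Topology Filter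

/-- The symmetric inverse semigroup `𝓘_γ^n` of partial bijections of the set `γ`
of rank `≤ n`, represented by their (finite) graphs. -/
structure SymInvSg (γ : Type*) (n : ℕ) where
  graph : Set (γ × γ)
  inj' : ∀ ⦃x y x' y'⦄, (x, y) ∈ graph → (x', y') ∈ graph → (x = x' ↔ y = y')
  finite' : graph.Finite
  card_le' : graph.ncard ≤ n

namespace SymInvSg

variable {γ : Type*} {n : ℕ}

theorem ext' {a b : SymInvSg γ n} (h : a.graph = b.graph) : a = b := by
  cases a; cases b; simpa using h

/-- Composition of partial bijections (in the left-to-right convention of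
transformation semigroups, the choice of convention being immaterial). -/
instance : Mul (SymInvSg γ n) where
  mul a b :=
    { graph := {p | ∃ y, (p.1, y) ∈ a.graph ∧ (y, p.2) ∈ b.graph}
      inj' := by
        rintro x z x' z' ⟨y, hxy, hyz⟩ ⟨y', hxy', hyz'⟩
        constructor
        · rintro rfl
          have hy : y = y' := (a.inj' hxy hxy').mp rfl
          subst hy
          exact (b.inj' hyz hyz').mp rfl
        · rintro rfl
          have hy : y = y' := (b.inj' hyz hyz').mpr rfl
          subst hy
          exact (a.inj' hxy hxy').mpr rfl
      finite' := by
        have : {p : γ × γ | ∃ y, (p.1, y) ∈ a.graph ∧ (y, p.2) ∈ b.graph} ⊆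
            (fun q : (γ × γ) × (γ × γ) => (q.1.1, q.2.2)) '' (a.graph ×ˢ b.graph) := by
          rintro ⟨x, z⟩ ⟨y, hxy, hyz⟩
          exact ⟨((x, y), (y, z)), ⟨hxy, hyz⟩, rfl⟩
        exact Set.Finite.subset (Set.Finite.image _ (a.finite'.prod b.finite')) this
      card_le' := by
        have hinj : Set.InjOn Prod.fst
            {p : γ × γ | ∃ y, (p.1, y) ∈ a.graph ∧ (y, p.2) ∈ b.graph} := by
          rintro ⟨x, z⟩ ⟨y, hxy, hyz⟩ ⟨x', z'⟩ ⟨y', hxy', hyz'⟩ h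
          simp only at h
          subst h
          have hy : y = y' := (a.inj' hxy hxy').mp rfl
          subst hy
          have hz : z = z' := (b.inj' hyz hyz').mp rfl
          simp [hz]
        calc ({p : γ × γ | ∃ y, (p.1, y) ∈ a.graph ∧ (y, p.2) ∈ b.graph}).ncard
            ≤ (Prod.fst '' a.graph).ncard := by
              refine Set.ncard_le_ncard_of_injOn Prod.fst ?_ hinj (a.finite'.image _)
              rintro ⟨x, z⟩ hp
              exact ⟨(x, hp.choose), hp.choose_spec.1, rfl⟩
          _ ≤ a.graph.ncard := Set.ncard_image_le a.finite'
          _ ≤ n := a.card_le' }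

theorem mul_graph (a b : SymInvSg γ n) :
    (a * b).graph = {p : γ × γ | ∃ y, (p.1, y) ∈ a.graph ∧ (y, p.2) ∈ b.graph} := rfl

instance : Semigroup (SymInvSg γ n) where
  mul_assoc a b c := by
    refine ext' ?_
    simp only [mul_graph]
    ext ⟨x, w⟩
    constructor
    · rintro ⟨z, ⟨y, hxy, hyz⟩, hzw⟩
      exact ⟨y, hxy, z, hyz, hzw⟩
    · rintro ⟨y, hxy, z, hyz, hzw⟩
      exact ⟨z, ⟨y, hxy, hyz⟩, hzw⟩

/-- The zero of `𝓘_γ^n` is the empty partial map. -/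
instance : Zero (SymInvSg γ n) :=
  ⟨{ graph := ∅
     inj' := by simp
     finite' := Set.finite_empty
     card_le' := by simp }⟩

/-- The natural partial order on the inverse semigroup `𝓘_γ^n`:
`α ≼ β` iff the graph of `α` is contained in the graph of `β`. -/
instance : PartialOrder (SymInvSg γ n) where
  le a b := a.graph ⊆ b.graph
  le_refl a := subset_rfl
  le_trans a b c h₁ h₂ := Set.Subset.trans h₁ h₂
  le_antisymm a b h₁ h₂ := ext' (subset_antisymm h₁ h₂)

/-- The rank of a partial bijection: the cardinality of its domain
(equivalently, of its graph). -/
noncomputable def rank (a : SymInvSg γ n) : ℕ := a.graph.ncard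

/-- `𝓘_A^n`: the subsemigroup of partial bijections with domain and range inside `A`. -/
def restrictedTo (A : Set γ) : Set (SymInvSg γ n) :=
  {α | ∀ p ∈ α.graph, p.1 ∈ A ∧ p.2 ∈ A}

end SymInvSg

/-- A topology is shift-continuous when all left and right translations are continuous,
i.e. the space is a semitopological semigroup. -/
def ShiftContinuous (X : Type*) [TopologicalSpace X] [Mul X] : Prop :=
  ∀ a : X, Continuous (fun x => a * x) ∧ Continuous (fun x => x * a)

/-- A space is feebly compact if every locally finite family of nonempty open sets is finite. -/
def FeeblyCompact (X : Type*) [TopologicalSpace X] : Prop :=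
  ∀ F : Set (Set X), (∀ U ∈ F, IsOpen U ∧ U.Nonempty) →
    LocallyFinite (fun U : F => (U : Set X)) → F.Finite

/-- A space is sequentially pracompact if it has a dense subset `D` such that every
sequence in `D` has a convergent subsequence. -/
def SequentiallyPracompact (X : Type*) [TopologicalSpace X] : Prop :=
  ∃ D : Set X, Dense D ∧ ∀ u : ℕ → X, (∀ k, u k ∈ D) →
    ∃ (x : X) (φ : ℕ → ℕ), StrictMono φ ∧ Filter.Tendsto (u ∘ φ) Filter.atTop (nhds x)

/-- A space is totally countably pracompact if it has a dense subset `D` such that every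
sequence in `D` has a subsequence whose closure is compact. -/
def TotallyCountablyPracompact (X : Type*) [TopologicalSpace X] : Prop :=
  ∃ D : Set X, Dense D ∧ ∀ u : ℕ → X, (∀ k, u k ∈ D) →
    ∃ φ : ℕ → ℕ, StrictMono φ ∧ IsCompact (closure (Set.range (u ∘ φ)))

/-- A space is countably pracompact if it has a dense subset `A` such that every infinite
subset of `A` has an accumulation point in the space. -/
def CountablyPracompact (X : Type*) [TopologicalSpace X] : Prop :=
  ∃ A : Set X, Dense A ∧ ∀ B ⊆ A, B.Infinite → ∃ x : X, AccPt x (Filter.principal B)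

/-- A space is ω-bounded-pracompact if it has a dense subset `D` such that every countable
subset of `D` has compact closure. -/
def OmegaBoundedPracompact (X : Type*) [TopologicalSpace X] : Prop :=
  ∃ D : Set X, Dense D ∧ ∀ C ⊆ D, C.Countable → IsCompact (closure C)

/-- A space is feebly ω-bounded if for every sequence of nonempty open sets there is a
compact set meeting all of them. -/
def FeeblyOmegaBounded (X : Type*) [TopologicalSpace X] : Prop :=
  ∀ U : ℕ → Set X, (∀ k, IsOpen (U k) ∧ (U k).Nonempty) →
    ∃ K : Set X, IsCompact K ∧ ∀ k, (K ∩ U k).Nonempty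

section General

variable {X : Type*} [TopologicalSpace X]

theorem isClopen_preimage_of_finite_range {Y : Type*} [TopologicalSpace Y] [T1Space Y]
    {f : X → Y} (hf : Continuous f) (hfin : (range f).Finite) (s : Set Y) :
    IsClopen (f ⁻¹' s) := by
  have hclosed (t : Set Y) : IsClosed (f ⁻¹' t) := by
    rw [← preimage_inter_range]
    exact (hfin.subset inter_subset_right).isClosed.preimage hf
  exact ⟨hclosed s, isClosed_compl_iff.mp (hclosed sᶜ)⟩

theorem tendsto_nhds_of_forall_subseq_mapClusterPt {u : ℕ → X} {x : X}
    (h : ∀ φ : ℕ → ℕ, StrictMono φ → MapClusterPt x atTop (u ∘ φ)) :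
    Tendsto u atTop (𝓝 x) := by
  by_contra hnot
  obtain ⟨V, hV, hout⟩ := not_tendsto_iff_exists_frequently_notMem.mp hnot
  obtain ⟨φ, hφ, hφV⟩ := extraction_of_frequently_atTop hout
  obtain ⟨k, hk⟩ := ((h φ hφ).frequently hV).exists
  exact hφV k hk

theorem SequentiallyPracompact.totallyCountablyPracompact [R1Space X]
    (h : SequentiallyPracompact X) : TotallyCountablyPracompact X := by
  obtain ⟨D, hD, hseq⟩ := h
  refine ⟨D, hD, fun u hu => ?_⟩
  obtain ⟨x, φ, hφ, hlim⟩ := hseq u hu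
  exact ⟨φ, hφ, hlim.isCompact_insert_range.closure_of_subset (subset_insert x _)⟩

theorem TotallyCountablyPracompact.feeblyCompact (h : TotallyCountablyPracompact X) :
    FeeblyCompact X := by
  obtain ⟨D, hD, hseq⟩ := h
  intro F hF hlf
  by_contra hinf
  have : Infinite F := infinite_coe_iff.mpr hinf
  let U : ℕ ↪ F := Infinite.natEmbedding F
  choose d hdU hdD using fun k =>
    hD.inter_open_nonempty _ (hF _ (U k).2).1 (hF _ (U k).2).2
  obtain ⟨φ, hφ, hK⟩ := hseq d hdD
  have hmeets : ∀ k, ((U (φ k) : Set X) ∩ closure (range (d ∘ φ))).Nonempty := fun k =>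
    ⟨d (φ k), hdU _, subset_closure ⟨k, rfl⟩⟩
  exact infinite_of_injective_forall_mem (U.injective.comp hφ.injective) hmeets
    (hlf.finite_nonempty_inter_compact hK)

theorem FeeblyCompact.finite_of_locallyFinite (h : FeeblyCompact X) {ι : Type*} {U : ι → Set X}
    (hopen : ∀ i, IsOpen (U i)) (hne : ∀ i, (U i).Nonempty) (hlf : LocallyFinite U) :
    Finite ι := by
  have hrange : (range U).Finite :=
    h (range U) (forall_mem_range.mpr fun i => ⟨hopen i, hne i⟩) hlf.on_range
  have hfiber : ∀ V ∈ range U, (U ⁻¹' {V}).Finite := by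
    rintro _ ⟨i, rfl⟩
    obtain ⟨x, hx⟩ := hne i
    exact (hlf.point_finite x).subset fun j (hj : U j = U i) => hj.symm.subset hx
  rw [← finite_univ_iff, ← preimage_range U]
  exact hrange.preimage' hfiber

theorem FeeblyCompact.exists_mapClusterPt (h : FeeblyCompact X) {u : ℕ → X}
    (hu : ∀ k, IsOpen {u k}) : ∃ x, MapClusterPt x atTop u := by
  by_contra! hno
  have hlf : LocallyFinite fun k => ({u k} : Set X) := by
    intro x
    obtain ⟨V, hV, hfew⟩ : ∃ V ∈ 𝓝 x, ¬ ∃ᶠ k in atTop, u k ∈ V := by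
      simpa only [mapClusterPt_iff_frequently, not_forall, exists_prop] using hno x
    refine ⟨V, hV, ?_⟩
    simpa only [singleton_inter_nonempty, Nat.frequently_atTop_iff_infinite, not_infinite]
      using hfew
  have := h.finite_of_locallyFinite hu (fun k => singleton_nonempty (u k)) hlf
  exact not_finite ℕ

end General

section ClopenUpSets

variable {X : Type*} [TopologicalSpace X] [PartialOrder X]

theorem totallySeparatedSpace_of_isClopen_Ici (hX : ∀ a : X, IsClopen (Ici a)) :
    TotallySeparatedSpace X := by
  refine totallySeparatedSpace_iff_exists_isClopen.mpr fun x y hxy => ?_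
  by_cases hle : x ≤ y
  · exact ⟨(Ici y)ᶜ, (hX y).compl, fun hyx => hxy (le_antisymm hle hyx), fun hy => hy le_rfl⟩
  · exact ⟨Ici x, hX x, le_rfl, hle⟩

variable [WellFoundedGT X]

theorem dense_setOf_isOpen_singleton_of_isOpen_Ici (hX : ∀ a : X, IsOpen (Ici a)) :
    Dense {a : X | IsOpen {a}} := by
  refine dense_iff_inter_open.mpr fun U hU hne => ?_
  obtain ⟨a, ha⟩ := exists_maximal_of_wellFoundedGT (· ∈ U) hne
  have hsingleton : U ∩ Ici a = {a} :=
    Subset.antisymm (fun b hb => (ha.eq_of_le hb.1 hb.2).symm)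
      (singleton_subset_iff.mpr ⟨ha.prop, le_rfl⟩)
  have hopen : IsOpen {a} := hsingleton ▸ hU.inter (hX a)
  exact ⟨a, ha.prop, hopen⟩

theorem FeeblyCompact.exists_tendsto_subseq_of_isClopen_Ici (h : FeeblyCompact X)
    (hX : ∀ a : X, IsClopen (Ici a)) {u : ℕ → X} (hu : ∀ k, IsOpen {u k}) :
    ∃ (a : X) (φ : ℕ → ℕ), StrictMono φ ∧ Tendsto (u ∘ φ) atTop (𝓝 a) := by
  have hbelow {x : X} {φ : ℕ → ℕ} (hφ : StrictMono φ) (hx : MapClusterPt x atTop (u ∘ φ)) :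
      ∃ᶠ k in atTop, x ≤ u k :=
    hφ.tendsto_atTop.frequently (hx.frequently ((hX x).isOpen.mem_nhds le_rfl))
  obtain ⟨x, hx⟩ := h.exists_mapClusterPt hu
  obtain ⟨a, ha⟩ := exists_maximal_of_wellFoundedGT (fun a => ∃ᶠ k in atTop, a ≤ u k)
    ⟨x, hbelow strictMono_id hx⟩
  obtain ⟨φ, hφ, hle⟩ := extraction_of_frequently_atTop ha.prop
  refine ⟨a, φ, hφ, tendsto_nhds_of_forall_subseq_mapClusterPt fun ψ hψ => ?_⟩
  obtain ⟨y, hy⟩ := h.exists_mapClusterPt (u := u ∘ φ ∘ ψ) fun k => hu _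
  have hay : a ≤ y := (hX a).isClosed.mem_of_mapClusterPt hy (Eventually.of_forall fun k => hle _)
  obtain rfl : a = y := ha.eq_of_le (hbelow (hφ.comp hψ) hy) hay
  exact hy

theorem sequentiallyPracompact_iff_totallyCountablyPracompact_iff_feeblyCompact_general
    (hX : ∀ a : X, IsClopen (Ici a)) :
    (SequentiallyPracompact X ↔ TotallyCountablyPracompact X) ∧
    (TotallyCountablyPracompact X ↔ FeeblyCompact X) := by
  have := totallySeparatedSpace_of_isClopen_Ici hX
  have hFS (h : FeeblyCompact X) : SequentiallyPracompact X :=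
    ⟨_, dense_setOf_isOpen_singleton_of_isOpen_Ici fun a => (hX a).isOpen,
      fun _ hu => h.exists_tendsto_subseq_of_isClopen_Ici hX hu⟩
  exact ⟨⟨fun h => h.totallyCountablyPracompact, fun h => hFS h.feeblyCompact⟩,
    ⟨fun h => h.feeblyCompact, fun h => (hFS h).totallyCountablyPracompact⟩⟩

end ClopenUpSets

namespace SymInvSg

variable {γ : Type*} {n : ℕ}

/-- The inverse of `α` in the inverse semigroup `𝓘_γ^n`, that is, the inverse partial bijection. -/
instance : Inv (SymInvSg γ n) where
  inv α :=
    { graph := Prod.swap ⁻¹' α.graph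
      inj' := fun _ _ _ _ h h' => (α.inj' h h').symm
      finite' := α.finite'.preimage Prod.swap_injective.injOn
      card_le' := (ncard_le_ncard_of_injOn Prod.swap (fun _ h => h) Prod.swap_injective.injOn
        α.finite').trans α.card_le' }

theorem mem_inv_graph {α : SymInvSg γ n} {x y : γ} :
    (x, y) ∈ α⁻¹.graph ↔ (y, x) ∈ α.graph :=
  Iff.rfl

theorem inv_mul_mul_inv_eq_inv_iff {α β : SymInvSg γ n} :
    α⁻¹ * β * α⁻¹ = α⁻¹ ↔ α ≤ β := by
  constructor
  · rintro h ⟨x, y⟩ hxy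
    have hyx : (y, x) ∈ (α⁻¹ * β * α⁻¹).graph := by rwa [h, mem_inv_graph]
    obtain ⟨y', ⟨x', hyx', hβ⟩, hyx''⟩ := hyx
    rw [mem_inv_graph] at hyx' hyx''
    obtain rfl : x' = x := (α.inj' hyx' hxy).mpr rfl
    obtain rfl : y' = y := (α.inj' hyx'' hxy).mp rfl
    exact hβ
  · refine fun h => ext' (Set.ext fun ⟨y, x⟩ => ⟨?_, fun hyx => ?_⟩)
    · rintro ⟨y', ⟨x', hyx', hβ⟩, hyx⟩
      rw [mem_inv_graph] at hyx'
      obtain rfl : y = y' := (β.inj' (h hyx') hβ).mp rfl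
      exact hyx
    · exact ⟨y, ⟨x, hyx, h (mem_inv_graph.mp hyx)⟩, hyx⟩

theorem finite_range_mul_mul (α δ : SymInvSg γ n) :
    (range fun β : SymInvSg γ n => α * β * δ).Finite := by
  have hbox : ((Prod.fst '' α.graph) ×ˢ (Prod.snd '' δ.graph)).Finite :=
    (α.finite'.image _).prod (δ.finite'.image _)
  refine Finite.of_finite_image (f := graph) (hbox.finite_subsets.subset ?_)
    fun _ _ _ _ h => ext' h
  rintro _ ⟨_, ⟨β, rfl⟩, rfl⟩ ⟨x, y⟩ ⟨_, ⟨_, hα, -⟩, hδ⟩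
  exact ⟨⟨_, hα, rfl⟩, ⟨_, hδ, rfl⟩⟩

theorem rank_strictMono : StrictMono (rank : SymInvSg γ n → ℕ) := fun _ β h =>
  ncard_lt_ncard ⟨h.le, h.not_ge⟩ β.finite'

instance : WellFoundedGT (SymInvSg γ n) :=
  StrictMono.wellFoundedGT (β := Fin (n + 1))
    (f := fun α => ⟨α.rank, Nat.lt_succ_of_le α.card_le'⟩) fun _ _ h => rank_strictMono h

theorem isClopen_Ici [TopologicalSpace (SymInvSg γ n)] [T1Space (SymInvSg γ n)]
    (hsc : ShiftContinuous (SymInvSg γ n)) (α : SymInvSg γ n) : IsClopen (Ici α) := by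
  have hcont : Continuous fun β : SymInvSg γ n => α⁻¹ * β * α⁻¹ :=
    (hsc α⁻¹).2.comp (hsc α⁻¹).1
  have hfiber : Ici α = (fun β : SymInvSg γ n => α⁻¹ * β * α⁻¹) ⁻¹' {α⁻¹} :=
    Set.ext fun _ => inv_mul_mul_inv_eq_inv_iff.symm
  rw [hfiber]
  exact isClopen_preimage_of_finite_range hcont (finite_range_mul_mul _ _) _

end SymInvSg

/-- For a `T₁`-semitopological semigroup `𝓘_λ^n` (`n` a positive integer,
`λ` an infinite cardinal) the conditions "sequentially pracompact",
"totally countably pracompact" and "feebly compact" are equivalent. -/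
theorem sequentiallyPracompact_iff_totallyCountablyPracompact_iff_feeblyCompact
    {γ : Type*} [Infinite γ] {n : ℕ} (hn : 0 < n)
    [TopologicalSpace (SymInvSg γ n)] [T1Space (SymInvSg γ n)]
    (hsc : ShiftContinuous (SymInvSg γ n)) :
    (SequentiallyPracompact (SymInvSg γ n) ↔ TotallyCountablyPracompact (SymInvSg γ n)) ∧
    (TotallyCountablyPracompact (SymInvSg γ n) ↔ FeeblyCompact (SymInvSg γ n)) :=
  sequentiallyPracompact_iff_totallyCountablyPracompact_iff_feeblyCompact_general
    (SymInvSg.isClopen_Ici hsc)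
end

section
/- Let n be any positive integer, λ any infinite cardinal, and A an arbitrary infinite subset of λ. If 𝓘_λ^n carries a compact shift-continuous T₁-topology (so it is a compact T₁-semitopological semigroup), then 𝓘_A^n with the topology induced from 𝓘_λ^n is a compact semitopological semigroup. -/
open Set Topology Filter

/-!
Sandwiching `s` between the idempotents `{(x, x)}` and `{(y, y)}` cuts its graph down to
`{(x, y)} ∩ s.graph`, so the product vanishes exactly when `(x, y) ∉ s.graph`. Since two-sided
shifts are continuous and `{0}` is closed, avoiding a given pair is a closed condition on `s`.
Membership in `𝓘_A^n` amounts to avoiding every pair outside `A ×ˢ A`, so `𝓘_A^n` is closed in a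
compact space.
-/

theorem ShiftContinuous.continuous_mul_mul {X : Type*} [TopologicalSpace X] [Mul X]
    (hX : ShiftContinuous X) (a b : X) : Continuous fun x => a * x * b :=
  (hX b).2.comp (hX a).1

namespace SymInvSg

variable {γ : Type*} {n : ℕ}

theorem eq_zero_iff_graph_eq_empty {s : SymInvSg γ n} : s = 0 ↔ s.graph = ∅ :=
  ⟨congrArg graph, fun h => ext' h⟩

theorem restrictedTo_eq_setOfPred_graph_subset (A : Set γ) :
    (restrictedTo A : Set (SymInvSg γ n)) = {s | s.graph ⊆ A ×ˢ A} :=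
  rfl

/-- The rank-one partial bijection sending `x` to `y`. Multiplying by the idempotents
`single hn x x` and `single hn y y` on either side isolates the pair `(x, y)` of a graph. -/
def single (hn : 0 < n) (x y : γ) : SymInvSg γ n where
  graph := {(x, y)}
  inj' := by
    rintro a b a' b' ⟨⟩ ⟨⟩
    exact iff_of_true rfl rfl
  finite' := finite_singleton _
  card_le' := (ncard_singleton _).trans_le hn

theorem graph_single_mul_mul_single (hn : 0 < n) (x y : γ) (s : SymInvSg γ n) :
    (single hn x x * s * single hn y y).graph = {(x, y)} ∩ s.graph := by
  ext ⟨a, b⟩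
  constructor
  · rintro ⟨_, ⟨_, ⟨⟩, hs⟩, ⟨⟩⟩
    exact ⟨rfl, hs⟩
  · rintro ⟨⟨⟩, hs⟩
    exact ⟨y, ⟨x, rfl, hs⟩, rfl⟩

theorem single_mul_mul_single_eq_zero_iff (hn : 0 < n) (x y : γ) (s : SymInvSg γ n) :
    single hn x x * s * single hn y y = 0 ↔ (x, y) ∉ s.graph := by
  rw [eq_zero_iff_graph_eq_empty, graph_single_mul_mul_single, singleton_inter_eq_empty]

section Topology

variable [TopologicalSpace (SymInvSg γ n)]

theorem isClosed_setOfPred_notMem_graph (hn : 0 < n) (hsc : ShiftContinuous (SymInvSg γ n))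
    (h0 : IsClosed {(0 : SymInvSg γ n)}) (p : γ × γ) :
    IsClosed {s : SymInvSg γ n | p ∉ s.graph} := by
  obtain ⟨x, y⟩ := p
  simp only [← single_mul_mul_single_eq_zero_iff hn]
  exact h0.preimage (hsc.continuous_mul_mul (single hn x x) (single hn y y))

theorem isClosed_setOfPred_graph_subset (hn : 0 < n) (hsc : ShiftContinuous (SymInvSg γ n))
    (h0 : IsClosed {(0 : SymInvSg γ n)}) (R : Set (γ × γ)) :
    IsClosed {s : SymInvSg γ n | s.graph ⊆ R} := by
  have avoid_compl : {s : SymInvSg γ n | s.graph ⊆ R} = ⋂ p ∈ Rᶜ, {s | p ∉ s.graph} := by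
    ext s
    simp only [mem_ofPred_eq, mem_iInter, mem_compl_iff, subset_def, not_imp_not]
  rw [avoid_compl]
  exact isClosed_biInter fun p _ => isClosed_setOfPred_notMem_graph hn hsc h0 p

theorem isClosed_restrictedTo (hn : 0 < n) (hsc : ShiftContinuous (SymInvSg γ n))
    (h0 : IsClosed {(0 : SymInvSg γ n)}) (A : Set γ) :
    IsClosed (restrictedTo A : Set (SymInvSg γ n)) := by
  rw [restrictedTo_eq_setOfPred_graph_subset]
  exact isClosed_setOfPred_graph_subset hn hsc h0 (A ×ˢ A)

end Topology

end SymInvSg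

theorem isCompact_restrictedTo_general {γ : Type*} {n : ℕ} (hn : 0 < n)
    [TopologicalSpace (SymInvSg γ n)] (h0 : IsClosed {(0 : SymInvSg γ n)})
    (hsc : ShiftContinuous (SymInvSg γ n)) [CompactSpace (SymInvSg γ n)] (A : Set γ) :
    IsCompact (SymInvSg.restrictedTo A : Set (SymInvSg γ n)) ∧
    ∀ a ∈ (SymInvSg.restrictedTo A : Set (SymInvSg γ n)),
      ContinuousOn (fun x => a * x) (SymInvSg.restrictedTo A : Set (SymInvSg γ n)) ∧
      ContinuousOn (fun x => x * a) (SymInvSg.restrictedTo A : Set (SymInvSg γ n)) :=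
  ⟨(SymInvSg.isClosed_restrictedTo hn hsc h0 A).isCompact,
    fun a _ => ⟨(hsc a).1.continuousOn, (hsc a).2.continuousOn⟩⟩

/-- If `𝓘_λ^n` is a compact `T₁`-semitopological semigroup (`n` a positive
integer, `λ` an infinite cardinal) and `A ⊆ λ` is infinite, then `𝓘_A^n` with the induced
topology is a compact semitopological semigroup. -/
theorem isCompact_restrictedTo {γ : Type*} [Infinite γ] {n : ℕ} (hn : 0 < n)
    [TopologicalSpace (SymInvSg γ n)] [T1Space (SymInvSg γ n)]
    (hsc : ShiftContinuous (SymInvSg γ n)) [CompactSpace (SymInvSg γ n)]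
    (A : Set γ) (hA : A.Infinite) :
    IsCompact (SymInvSg.restrictedTo A : Set (SymInvSg γ n)) ∧
    ∀ a ∈ (SymInvSg.restrictedTo A : Set (SymInvSg γ n)),
      ContinuousOn (fun x => a * x) (SymInvSg.restrictedTo A : Set (SymInvSg γ n)) ∧
      ContinuousOn (fun x => x * a) (SymInvSg.restrictedTo A : Set (SymInvSg γ n)) := by
  exact isCompact_restrictedTo_general hn isClosed_singleton hsc A
end
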